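/- Fix an integer k ≥ 1. There exists a constant c > 0, depending only on q, ζ₋, ζ₊ and k, such that for every N > k and every X ∈ 𝔾_N, Σ over Y ∈ 𝔾_{N−1} satisfying y_{(i)} = x_{(i)} for all i = 1,…,k of Λ^N_{N−1}(X,Y) is at least 1 − e^{−cN}/c, where (x_{(i)}) and (y_{(i)}) are the variational series of X and Y respectively. -/

import Mathlib

open scoped BigOperators
open Classical

noncomputable section

/-- The double q-lattice Λ = {ζ₋ qᵐ} ∪ {ζ₊ qⁿ}. -/
def Lambda (q zm zp : ℝ) : Set ℝ :=
  {x | ∃ m : ℤ, x = zm * q ^ m} ∪ {x | ∃ n : ℤ, x = zp * q ^ n}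

/-- The interval I(a,b) of the double q-lattice. -/
def qInterval (q zm zp a b : ℝ) : Set ℝ :=
  if b < 0 then Set.Ico a b ∩ Lambda q zm zp
  else if a < 0 then Set.Icc a b ∩ Lambda q zm zp
  else Set.Ioc a b ∩ Lambda q zm zp

/-- N-point configurations on the lattice. -/
def Conf (q zm zp : ℝ) (N : ℕ) : Type :=
  {x : Fin N → ℝ // StrictMono x ∧ ∀ i, x i ∈ Lambda q zm zp}

/-- Interlacement Y ≺ X. -/
def Interlaces (q zm zp : ℝ) {N : ℕ} (Y : Conf q zm zp N) (X : Conf q zm zp (N+1)) : Prop :=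
  ∀ i : Fin N, Y.1 i ∈ qInterval q zm zp (X.1 i.castSucc) (X.1 i.succ)

/-- Vandermonde-type product ∏_{i<j} (x_j - x_i). -/
def vprod {N : ℕ} (x : Fin N → ℝ) : ℝ :=
  ∏ p ∈ Finset.univ.filter (fun p : Fin N × Fin N => p.1 < p.2), (x p.2 - x p.1)

/-- finite q-Pochhammer symbol (a;q)_n, real version. -/
def qpochR (a q : ℝ) (n : ℕ) : ℝ := ∏ m ∈ Finset.range n, (1 - a * q ^ m)

/-- The q-link Λ^{N+1}_N. -/
def qlink (q zm zp : ℝ) (N : ℕ) (X : Conf q zm zp (N+1)) (Y : Conf q zm zp N) : ℝ :=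
  if Interlaces q zm zp Y X then
    (∏ i, |Y.1 i|) * qpochR q q N * vprod Y.1 / vprod X.1
  else 0


/-- comparison in the variational order: |a| < |b|, or |a| = |b| and a ≤ b
(so that among two points of equal absolute value the positive one is "bigger"). -/
def varLE (a b : ℝ) : Prop := |a| < |b| ∨ (|a| = |b| ∧ a ≤ b)

/-- v : Fin N → ℝ is the variational series of the configuration X: a rearrangement of
the points of X listed in decreasing order of absolute value, positive points first
among equal absolute values. -/
def IsVarSeries (q zm zp : ℝ) {N : ℕ} (X : Conf q zm zp N) (v : Fin N → ℝ) : Prop :=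
  (∃ σ : Equiv.Perm (Fin N), v = X.1 ∘ σ) ∧ ∀ i j : Fin N, i < j → varLE (v j) (v i)

/-!
Of two consecutive points of `X`, call dominant the one that comes first in the variational series.
The dominant endpoints of the `M` intervals are pairwise distinct, and they exhaust `X` up to the
last point of its variational series. A tuple `Y` interlacing with `X` is bounded in the variational
order by the tuple of dominant endpoints, so it shares the first `k` terms of the series as soon as
it contains the `k` largest dominant endpoints.

Suppose `Y` misses one of these, `a`, and has `t ≠ a` in its interval. Since `t / a ≤ q`, replacing
`t` by `a` increases the distance to each of the `M - k` smaller points by a factor of at least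
`2 / (1 + q)`, while it decreases the other distances at most by a constant factor each. The weights
of the new tuples sum to at most one, and the sum of `|t| / |a|` over the interval is at most
`2 / (1 - q)`, so this case has probability `O(((1 + q) / 2) ^ M)`. A union bound over the `k`
largest dominant endpoints concludes.

That the total mass is one comes from expanding `vprod Y` as a determinant and summing each entry
over its interval, where the geometric series telescope into `vprod X`.
-/

section Lattice

variable {q zm zp a b t : ℝ}

/-- The geometric progression from `a` towards `0`. It is introduced because `|t|` on
`qInterval q zm zp a b` is the difference of the identity functions on the rays of `b` and `a`. -/
def qray (q a : ℝ) : Set ℝ := Set.range fun n : ℕ => a * q ^ n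

lemma ne_zero_of_mem_Lambda (hq0 : 0 < q) (hzm : zm < 0) (hzp : 0 < zp)
    (ht : t ∈ Lambda q zm zp) : t ≠ 0 := by
  obtain ⟨m, rfl⟩ | ⟨m, rfl⟩ := ht
  · exact mul_ne_zero hzm.ne (zpow_pos hq0 m).ne'
  · exact mul_ne_zero hzp.ne' (zpow_pos hq0 m).ne'

lemma mul_zpow_mem_Lambda (hq0 : 0 < q) (ha : a ∈ Lambda q zm zp) (n : ℤ) :
    a * q ^ n ∈ Lambda q zm zp := by
  obtain ⟨m, rfl⟩ | ⟨m, rfl⟩ := ha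
  · exact Or.inl ⟨m + n, by rw [zpow_add₀ hq0.ne', mul_assoc]⟩
  · exact Or.inr ⟨m + n, by rw [zpow_add₀ hq0.ne', mul_assoc]⟩

lemma exists_eq_mul_zpow_of_mem_Lambda (hq0 : 0 < q) (hzm : zm < 0) (hzp : 0 < zp)
    (ht : t ∈ Lambda q zm zp) (ha : a ∈ Lambda q zm zp) (hta : 0 < t / a) :
    ∃ n : ℤ, t = a * q ^ n := by
  have hpow (n : ℤ) : 0 < q ^ n := zpow_pos hq0 n
  have same_branch (z : ℝ) (m n : ℤ) : z * q ^ m = z * q ^ n * q ^ (m - n) := by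
    rw [mul_assoc, ← zpow_add₀ hq0.ne', add_sub_cancel]
  obtain ⟨m, rfl⟩ | ⟨m, rfl⟩ := ht <;> obtain ⟨n, rfl⟩ | ⟨n, rfl⟩ := ha
  · exact ⟨m - n, same_branch zm m n⟩
  · exact absurd hta (div_neg_of_neg_of_pos (mul_neg_of_neg_of_pos hzm (hpow m))
      (mul_pos hzp (hpow n))).not_gt
  · exact absurd hta (div_neg_of_pos_of_neg (mul_pos hzp (hpow m))
      (mul_neg_of_neg_of_pos hzm (hpow n))).not_gt
  · exact ⟨m - n, same_branch zp m n⟩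

lemma div_le_or_inv_le_div_of_mem_Lambda (hq0 : 0 < q) (hq1 : q < 1) (hzm : zm < 0)
    (hzp : 0 < zp) (ht : t ∈ Lambda q zm zp) (ha : a ∈ Lambda q zm zp) (hne : t ≠ a) :
    t / a ≤ q ∨ q⁻¹ ≤ t / a := by
  rcases le_or_gt (t / a) 0 with hneg | hpos
  · exact Or.inl (hneg.trans hq0.le)
  obtain ⟨n, rfl⟩ := exists_eq_mul_zpow_of_mem_Lambda hq0 hzm hzp ht ha hpos
  have hn : n ≠ 0 := by rintro rfl; simp at hne
  rw [mul_div_cancel_left₀ _ (ne_zero_of_mem_Lambda hq0 hzm hzp ha)]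
  rcases hn.lt_or_gt with hn | hn
  · refine Or.inr ?_
    rw [← zpow_neg_one]
    exact zpow_le_zpow_right_of_le_one₀ hq0 hq1.le (by lia)
  · refine Or.inl ?_
    nth_rw 2 [← zpow_one q]
    exact zpow_le_zpow_right_of_le_one₀ hq0 hq1.le (by lia)

lemma mem_qray_iff (hq0 : 0 < q) (hq1 : q < 1) (hzm : zm < 0) (hzp : 0 < zp)
    (ha : a ∈ Lambda q zm zp) :
    t ∈ qray q a ↔ t ∈ Lambda q zm zp ∧ (0 < t ∧ t ≤ a ∨ t < 0 ∧ a ≤ t) := by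
  have ha0 := ne_zero_of_mem_Lambda hq0 hzm hzp ha
  constructor
  · rintro ⟨n, rfl⟩
    refine ⟨by simpa using mul_zpow_mem_Lambda hq0 ha n, ?_⟩
    have hn0 : 0 < q ^ n := pow_pos hq0 n
    have hn1 : q ^ n ≤ 1 := pow_le_one₀ hq0.le hq1.le
    rcases ha0.lt_or_gt with ha0 | ha0
    · exact Or.inr ⟨mul_neg_of_neg_of_pos ha0 hn0, by nlinarith⟩
    · exact Or.inl ⟨mul_pos ha0 hn0, by nlinarith⟩
  · rintro ⟨ht, hta⟩
    obtain ⟨hpos, hle⟩ : 0 < t / a ∧ t / a ≤ 1 := by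
      rcases hta with ⟨ht0, hta⟩ | ⟨ht0, hta⟩
      · exact ⟨div_pos ht0 (ht0.trans_le hta), (div_le_one (ht0.trans_le hta)).2 hta⟩
      · exact ⟨div_pos_of_neg_of_neg ht0 (hta.trans_lt ht0),
          (div_le_one_of_neg (hta.trans_lt ht0)).2 hta⟩
    obtain ⟨n, rfl⟩ := exists_eq_mul_zpow_of_mem_Lambda hq0 hzm hzp ht ha hpos
    rw [mul_div_cancel_left₀ _ ha0, ← zpow_zero q, zpow_le_zpow_iff_right_of_lt_one₀ hq0 hq1] at hle
    lift n to ℕ using hle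
    exact ⟨n, by simp⟩

lemma indicator_qInterval_abs_eq_sub (hq0 : 0 < q) (hq1 : q < 1) (hzm : zm < 0) (hzp : 0 < zp)
    (ha : a ∈ Lambda q zm zp) (hb : b ∈ Lambda q zm zp) (hab : a < b) (t : ℝ) :
    (qInterval q zm zp a b).indicator abs t =
      (qray q b).indicator id t - (qray q a).indicator id t := by
  have hne {s : ℝ} (hs : s ∈ Lambda q zm zp) : s ≠ 0 := ne_zero_of_mem_Lambda hq0 hzm hzp hs
  by_cases ht : t ∈ Lambda q zm zp
  · simp only [Set.indicator_apply, mem_qray_iff hq0 hq1 hzm hzp ha,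
      mem_qray_iff hq0 hq1 hzm hzp hb, qInterval, id, ht, true_and]
    grind [hne ha, hne hb, hne ht]
  · simp only [Set.indicator_apply, mem_qray_iff hq0 hq1 hzm hzp ha,
      mem_qray_iff hq0 hq1 hzm hzp hb, qInterval, ht, false_and, if_false, sub_zero]
    grind

lemma hasSum_indicator_qray_pow (hq0 : 0 < q) (hq1 : q < 1) (ha : a ≠ 0) {n : ℕ} (hn : n ≠ 0) :
    HasSum ((qray q a).indicator (· ^ n)) (a ^ n / (1 - q ^ n)) := by
  have hinj : Function.Injective fun m : ℕ => a * q ^ m :=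
    (mul_right_injective₀ ha).comp (pow_right_injective₀ hq0 hq1.ne)
  rw [qray, ← hasSum_subtype_iff_indicator, ← (Equiv.ofInjective _ hinj).hasSum_iff]
  simpa only [Function.comp_def, Equiv.ofInjective_apply, mul_pow, ← pow_mul, mul_comm n,
    div_eq_mul_inv] using
    (hasSum_geometric_of_lt_one (pow_nonneg hq0.le n) (pow_lt_one₀ hq0.le hq1 hn)).mul_left (a ^ n)

lemma hasSum_indicator_qInterval_abs_mul_pow (hq0 : 0 < q) (hq1 : q < 1) (hzm : zm < 0)
    (hzp : 0 < zp) (ha : a ∈ Lambda q zm zp) (hb : b ∈ Lambda q zm zp) (hab : a < b) (j : ℕ) :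
    HasSum (fun t => (qInterval q zm zp a b).indicator abs t * t ^ j)
      ((b ^ (j + 1) - a ^ (j + 1)) / (1 - q ^ (j + 1))) := by
  have hterm (t : ℝ) : (qInterval q zm zp a b).indicator abs t * t ^ j =
      (qray q b).indicator (· ^ (j + 1)) t - (qray q a).indicator (· ^ (j + 1)) t := by
    rw [indicator_qInterval_abs_eq_sub hq0 hq1 hzm hzp ha hb hab]
    simp only [Set.indicator_apply, id, sub_mul, ite_mul, zero_mul, pow_succ']
  rw [funext hterm, sub_div]
  exact (hasSum_indicator_qray_pow hq0 hq1 (ne_zero_of_mem_Lambda hq0 hzm hzp hb)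
    j.succ_ne_zero).sub (hasSum_indicator_qray_pow hq0 hq1
      (ne_zero_of_mem_Lambda hq0 hzm hzp ha) j.succ_ne_zero)

lemma lt_of_mem_qInterval {c d u : ℝ} (ht : t ∈ qInterval q zm zp a b)
    (hu : u ∈ qInterval q zm zp c d) (hbc : b ≤ c) (hb : b ≠ 0) : t < u := by
  unfold qInterval at ht hu
  grind [hb.lt_or_gt]

lemma qInterval_subset_Icc : qInterval q zm zp a b ⊆ Set.Icc a b := by
  unfold qInterval
  grind

lemma qInterval_subset_Lambda : qInterval q zm zp a b ⊆ Lambda q zm zp := by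
  unfold qInterval
  grind

end Lattice

section Sums

lemma hasSum_prod_apply {n : ℕ} {α : Fin n → Type*} {f : ∀ i, α i → ℝ} {s : Fin n → ℝ}
    (h : ∀ i, HasSum (f i) (s i)) : HasSum (fun y : ∀ i, α i => ∏ i, f i (y i)) (∏ i, s i) := by
  induction n with
  | zero => simp
  | succ n ih =>
    have htail := ih fun i => h i.succ
    have hsummable := summable_mul_of_summable_norm (h 0).summable.norm htail.summable.norm
    rw [Fin.prod_univ_succ, ← (Fin.consEquiv α).hasSum_iff]
    simpa only [Function.comp_def, Fin.consEquiv_apply, Fin.prod_univ_succ, Fin.cons_zero,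
      Fin.cons_succ] using (h 0).mul htail hsummable

lemma tsum_mul_update_le {ι : Type*} [DecidableEq ι] {β : ι → Type*} {s : ι} {f : β s → ℝ}
    {g : (∀ i, β i) → ℝ} {A B : ℝ} (hf0 : ∀ t, 0 ≤ f t) (hg0 : ∀ y, 0 ≤ g y)
    (hf : HasSum f A) (hg : HasSum g B) (a : β s) :
    Summable (fun y => f (y s) * g (Function.update y s a)) ∧
      ∑' y, f (y s) * g (Function.update y s a) ≤ A * B := by
  have hmul := hf.mul hg (summable_mul_of_summable_norm hf.summable.norm hg.summable.norm)
  have hinj : Function.Injective fun y : ∀ i, β i => (y s, Function.update y s a) := by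
    intro y z hyz
    obtain ⟨hs, hupdate⟩ := Prod.mk.inj hyz
    rw [← Function.update_eq_self s y, ← Function.update_idem a, hupdate, hs,
      Function.update_idem, Function.update_eq_self]
  refine ⟨hmul.summable.comp_injective hinj, ?_⟩
  rw [← hmul.tsum_eq]
  exact tsum_comp_le_tsum_of_inj hmul.summable (fun p => mul_nonneg (hf0 _) (hg0 _)) hinj

lemma le_tsum_subtype_add_sum_tsum_indicator {α ι : Type*} {f : α → ℝ} {A : ℝ} (hf0 : ∀ y, 0 ≤ f y)
    (hf : HasSum f A) (G : Set α) (S : Finset ι) (B : ι → Set α)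
    (hcover : ∀ y, f y ≠ 0 → y ∉ G → ∃ s ∈ S, y ∈ B s) :
    A ≤ ∑' y : G, f y + ∑ s ∈ S, ∑' y, (B s).indicator f y := by
  have hind0 (E : Set α) (y : α) : 0 ≤ E.indicator f y := Set.indicator_nonneg (fun _ _ => hf0 _) y
  have hsum : Summable fun y => ∑ s ∈ S, (B s).indicator f y :=
    summable_sum fun s _ => hf.summable.indicator (B s)
  rw [tsum_subtype, ← Summable.tsum_finsetSum fun s _ => hf.summable.indicator (B s),
    ← (hf.summable.indicator G).tsum_add hsum, ← hf.tsum_eq]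
  refine hf.summable.tsum_le_tsum (fun y => ?_) ((hf.summable.indicator G).add hsum)
  have hsum0 : 0 ≤ ∑ s ∈ S, (B s).indicator f y := Finset.sum_nonneg fun s _ => hind0 _ y
  by_cases hy0 : f y = 0
  · rw [hy0]
    exact add_nonneg (hind0 G y) hsum0
  by_cases hyG : y ∈ G
  · rw [Set.indicator_of_mem hyG]
    exact le_add_of_nonneg_right hsum0
  · obtain ⟨s, hs, hys⟩ := hcover y hy0 hyG
    calc f y = (B s).indicator f y := (Set.indicator_of_mem hys f).symm
      _ ≤ ∑ s ∈ S, (B s).indicator f y :=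
        Finset.single_le_sum (f := fun s => (B s).indicator f y) (fun s _ => hind0 _ y) hs
      _ ≤ _ := le_add_of_nonneg_left (hind0 G y)

end Sums

section Vandermonde

variable {n : ℕ}

lemma vprod_pos {x : Fin n → ℝ} (hx : StrictMono x) : 0 < vprod x :=
  Finset.prod_pos fun _ hp => sub_pos.2 (hx (Finset.mem_filter.1 hp).2)

lemma vprod_eq_det_vandermonde (x : Fin n → ℝ) : vprod x = (Matrix.vandermonde x).det := by
  rw [Matrix.det_vandermonde, vprod, Finset.prod_filter, ← Finset.univ_product_univ,
    Finset.prod_product]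
  refine Finset.prod_congr rfl fun i _ => ?_
  rw [← Finset.prod_filter, Finset.filter_lt_eq_Ioi]

lemma vprod_eq_det_pow_sub_pow (x : Fin (n + 1) → ℝ) :
    vprod x = (Matrix.of fun i j : Fin n =>
      x i.succ ^ ((j : ℕ) + 1) - x i.castSucc ^ ((j : ℕ) + 1)).det := by
  let B : Matrix (Fin (n + 1)) (Fin (n + 1)) ℝ := Matrix.of fun i j =>
    Fin.cases (x 0 ^ (j : ℕ)) (fun i => x i.succ ^ (j : ℕ) - x i.castSucc ^ (j : ℕ)) i
  have hrow : (Matrix.vandermonde x).det = B.det :=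
    Matrix.det_eq_of_forall_row_eq_smul_add_pred (fun _ => 1)
      (fun j => by simp [B, Matrix.vandermonde]) (fun i j => by simp [B, Matrix.vandermonde])
  rw [vprod_eq_det_vandermonde, hrow, Matrix.det_succ_column_zero, Fin.sum_univ_succ]
  simp [B, Matrix.submatrix]

lemma hasSum_prod_mul_vprod {f : Fin n → ℝ → ℝ} {m : Matrix (Fin n) (Fin n) ℝ}
    (h : ∀ i j : Fin n, HasSum (fun t => f i t * t ^ (j : ℕ)) (m i j)) :
    HasSum (fun y : Fin n → ℝ => (∏ i, f i (y i)) * vprod y) m.det := by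
  have hdet (y : Fin n → ℝ) : (∏ i, f i (y i)) * vprod y =
      ∑ σ : Equiv.Perm (Fin n), (Equiv.Perm.sign σ : ℤ) • ∏ i, f i (y i) * y i ^ (σ i : ℕ) := by
    rw [vprod_eq_det_vandermonde, ← Matrix.det_mul_column, ← Matrix.det_transpose,
      Matrix.det_apply]
    rfl
  rw [funext hdet, ← Matrix.det_transpose, Matrix.det_apply]
  exact hasSum_sum fun σ _ => (hasSum_prod_apply fun i => h i (σ i)).const_smul _

lemma vprod_eq_prod_erase_mul {y : Fin n → ℝ} (hy : StrictMono y) (s : Fin n) :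
    vprod y = (∏ l ∈ Finset.univ.erase s, |y l - y s|) *
      ∏ p : Fin n × Fin n with p.1 < p.2 ∧ p.1 ≠ s ∧ p.2 ≠ s, (y p.2 - y p.1) := by
  have hpairs : ∏ p : Fin n × Fin n with p.1 < p.2 ∧ ¬(p.1 ≠ s ∧ p.2 ≠ s), (y p.2 - y p.1) =
      ∏ l ∈ Finset.univ.erase s, |y l - y s| := by
    refine (Finset.prod_nbij' (fun l => if l < s then (l, s) else (s, l))
      (fun p => if p.1 = s then p.2 else p.1) ?_ ?_ ?_ ?_ fun l hl => ?_).symm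
    any_goals grind
    rcases (Finset.ne_of_mem_erase hl).lt_or_gt with hls | hls
    · rw [if_pos hls, abs_sub_comm, abs_of_pos (sub_pos.2 (hy hls))]
    · rw [if_neg hls.not_gt, abs_of_pos (sub_pos.2 (hy hls))]
  rw [vprod, ← Finset.prod_filter_mul_prod_filter_not _ fun p => p.1 ≠ s ∧ p.2 ≠ s,
    Finset.filter_filter, Finset.filter_filter, hpairs, mul_comm]

lemma vprod_le_prod_mul_vprod_update {y : Fin n → ℝ} {s : Fin n} {a : ℝ} {β : Fin n → ℝ}
    (hy : StrictMono y) (hya : StrictMono (Function.update y s a))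
    (hβ : ∀ l, l ≠ s → |y l - y s| ≤ β l * |y l - a|) :
    vprod y ≤ (∏ l ∈ Finset.univ.erase s, β l) * vprod (Function.update y s a) := by
  have hfar : ∏ l ∈ Finset.univ.erase s, |Function.update y s a l - Function.update y s a s| =
      ∏ l ∈ Finset.univ.erase s, |y l - a| :=
    Finset.prod_congr rfl fun l hl => by
      rw [Function.update_self, Function.update_of_ne (Finset.ne_of_mem_erase hl)]
  have hrest : ∏ p : Fin n × Fin n with p.1 < p.2 ∧ p.1 ≠ s ∧ p.2 ≠ s,
        (Function.update y s a p.2 - Function.update y s a p.1) =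
      ∏ p : Fin n × Fin n with p.1 < p.2 ∧ p.1 ≠ s ∧ p.2 ≠ s, (y p.2 - y p.1) :=
    Finset.prod_congr rfl fun p hp => by
      obtain ⟨-, -, h1, h2⟩ := Finset.mem_filter.1 hp
      rw [Function.update_of_ne h1, Function.update_of_ne h2]
  rw [vprod_eq_prod_erase_mul hy s, vprod_eq_prod_erase_mul hya s, hfar, hrest, ← mul_assoc,
    ← Finset.prod_mul_distrib]
  refine mul_le_mul_of_nonneg_right (Finset.prod_le_prod (fun l _ => abs_nonneg _) fun l hl =>
    hβ l (Finset.ne_of_mem_erase hl)) (Finset.prod_nonneg fun p hp => ?_)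
  exact (sub_pos.2 (hy (Finset.mem_filter.1 hp).2.1)).le

end Vandermonde

section Interlacing

variable {q zm zp : ℝ} {M : ℕ} {X : Conf q zm zp (M + 1)} {y : Fin M → ℝ}

namespace Conf

/-- The tuples that interlace with `X`. Unlike `Interlaces`, this speaks of unbundled tuples, so
that a sum over it is the restriction of a sum over `Fin M → ℝ`. -/
def interlacing (X : Conf q zm zp (M + 1)) : Set (Fin M → ℝ) :=
  Set.univ.pi fun i => qInterval q zm zp (X.1 i.castSucc) (X.1 i.succ)

/-- The endpoint of the `i`-th interval between consecutive points of `X` that comes first in the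
variational series (the right one, if both have the same absolute value). -/
def dominant (X : Conf q zm zp (M + 1)) (i : Fin M) : ℝ :=
  if |X.1 i.succ| < |X.1 i.castSucc| then X.1 i.castSucc else X.1 i.succ

lemma castSucc_lt_succ (i : Fin M) : X.1 i.castSucc < X.1 i.succ := X.2.1 Fin.castSucc_lt_succ

lemma mem_interlacing :
    y ∈ X.interlacing ↔ ∀ i, y i ∈ qInterval q zm zp (X.1 i.castSucc) (X.1 i.succ) :=
  Set.mem_univ_pi

lemma strictMono_of_mem_interlacing (hq0 : 0 < q) (hzm : zm < 0) (hzp : 0 < zp)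
    (hy : y ∈ X.interlacing) : StrictMono y := fun i j hij =>
  lt_of_mem_qInterval (mem_interlacing.1 hy i) (mem_interlacing.1 hy j)
    (X.2.1.monotone (Fin.succ_le_castSucc_iff.2 hij))
    (ne_zero_of_mem_Lambda hq0 hzm hzp (X.2.2 _))

lemma mem_Lambda_of_mem_interlacing (hy : y ∈ X.interlacing) (i : Fin M) :
    y i ∈ Lambda q zm zp :=
  qInterval_subset_Lambda (mem_interlacing.1 hy i)

lemma dominant_mem_interlacing : X.dominant ∈ X.interlacing := mem_interlacing.2 fun i => by
  have hlt := X.castSucc_lt_succ i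
  have hmem := X.2.2
  unfold dominant qInterval
  grind [abs_of_neg]

lemma dominant_eq_or (i : Fin M) :
    X.dominant i = X.1 i.castSucc ∨ X.dominant i = X.1 i.succ := by
  unfold dominant
  grind

lemma varLE_dominant {t : ℝ} {i : Fin M} (ht : t ∈ Set.Icc (X.1 i.castSucc) (X.1 i.succ)) :
    varLE t (X.dominant i) := by
  unfold dominant varLE
  grind

end Conf

end Interlacing

section VariationalOrder

open scoped Finset

/-- The sort key of the variational order: a point with a smaller key comes earlier in the
variational series. -/
def varKey (t : ℝ) : ℝ ×ₗ ℝ := toLex (-|t|, -t)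

lemma varKey_injective : Function.Injective varKey := fun _ _ h =>
  neg_injective (Prod.mk.inj (toLex.injective h)).2

lemma varKey_le_varKey_iff {a b : ℝ} : varKey b ≤ varKey a ↔ varLE a b := by
  simp only [varKey, Prod.Lex.toLex_le_toLex, varLE, neg_lt_neg_iff, neg_inj, neg_le_neg_iff,
    eq_comm]

variable {q zm zp : ℝ} {M : ℕ}

lemma isVarSeries_iff {Y : Conf q zm zp M} {v : Fin M → ℝ} :
    IsVarSeries q zm zp Y v ↔
      (∃ σ : Equiv.Perm (Fin M), v = Y.1 ∘ σ) ∧ Monotone (varKey ∘ v) := by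
  simp only [IsVarSeries, monotone_iff_forall_lt, Function.comp_apply, varKey_le_varKey_iff]

/-- The interval whose dominant endpoint came last in the variational series would have both
endpoints equal. -/
lemma IsVarSeries.exists_perm_dominant (hq0 : 0 < q) (hzm : zm < 0) (hzp : 0 < zp)
    {X : Conf q zm zp (M + 1)} {v : Fin (M + 1) → ℝ} (hv : IsVarSeries q zm zp X v) :
    ∃ τ : Equiv.Perm (Fin M), ∀ j, X.dominant (τ j) = v j.castSucc := by
  obtain ⟨⟨σ, rfl⟩, hmono⟩ := isVarSeries_iff.1 hv
  have hle_last (l : Fin (M + 1)) : varKey (X.1 l) ≤ varKey (X.1 (σ (Fin.last M))) := by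
    simpa using hmono (Fin.le_last (σ.symm l))
  have hexists (i : Fin M) : ∃ p : Fin M, X.dominant i = X.1 (σ p.castSucc) := by
    have hlt := X.castSucc_lt_succ i
    obtain ⟨r, hr⟩ : ∃ r, X.dominant i = X.1 (σ r) := by
      rcases X.dominant_eq_or i with h | h
      · exact ⟨σ.symm i.castSucc, by rw [h, σ.apply_symm_apply]⟩
      · exact ⟨σ.symm i.succ, by rw [h, σ.apply_symm_apply]⟩
    induction r using Fin.lastCases with
    | cast p => exact ⟨p, hr⟩
    | last =>
      have heq {l : Fin (M + 1)} (hl : X.1 l ∈ Set.Icc (X.1 i.castSucc) (X.1 i.succ)) :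
          X.1 l = X.dominant i :=
        varKey_injective <| le_antisymm (hr ▸ hle_last l)
          (varKey_le_varKey_iff.2 (Conf.varLE_dominant hl))
      exact absurd ((heq ⟨le_rfl, hlt.le⟩).trans (heq ⟨hlt.le, le_rfl⟩).symm) hlt.ne
  choose e he using hexists
  have hdominant : Function.Injective X.dominant :=
    (Conf.strictMono_of_mem_interlacing hq0 hzm hzp Conf.dominant_mem_interlacing).injective
  have heinj : Function.Injective e := fun i j hij => hdominant (by rw [he, he, hij])
  let τ := Equiv.ofBijective e (Finite.injective_iff_bijective.1 heinj)
  have hτ (j : Fin M) : e (τ.symm j) = j := τ.apply_symm_apply j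
  exact ⟨τ.symm, fun j => by rw [he, hτ, Function.comp_apply]⟩

lemma sort_apply_eq_of_le {α : Type*} [LinearOrder α] {n k : ℕ} {f w : Fin n → α}
    (hw : Monotone w) (hwf : w ≤ f) (heq : ∀ j : Fin n, (j : ℕ) < k → f j = w j) (i : Fin n)
    (hi : (i : ℕ) < k) : f (Tuple.sort f i) = w i := by
  have hcard (p : α → Prop) [DecidablePred p] :
      #{j | p (f (Tuple.sort f j))} = #{j | p (f j)} :=
    Finset.card_equiv (Tuple.sort f) (by simp)
  apply le_antisymm
  · refine (Tuple.lt_card_le_iff_apply_le_of_monotone (Tuple.monotone_sort f)).1 ?_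
    have hsub : Finset.Iic i ⊆ Finset.univ.filter (f · ≤ w i) := fun j hj => by
      have hji : j ≤ i := Finset.mem_Iic.1 hj
      simpa [heq j ((Fin.le_def.1 hji).trans_lt hi)] using hw hji
    calc (i : ℕ) < #(Finset.Iic i) := by simp
      _ ≤ #{j | f j ≤ w i} := Finset.card_le_card hsub
      _ = #{j | (f ∘ Tuple.sort f) j ≤ w i} := (hcard (· ≤ w i)).symm
  · refine not_lt.1 fun hlt => lt_irrefl (i : ℕ) ?_
    have hsub : Finset.univ.filter (f · < w i) ⊆ Finset.Iio i := fun j hj =>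
      Finset.mem_Iio.2 <| lt_of_not_ge fun hij =>
        ((hw hij).trans (hwf j)).not_gt (Finset.mem_filter.1 hj).2
    calc (i : ℕ) < #{j | (f ∘ Tuple.sort f) j < w i} :=
          (Tuple.lt_card_lt_iff_apply_lt_of_monotone (Tuple.monotone_sort f)).2 hlt
      _ = #{j | f j < w i} := hcard (· < w i)
      _ ≤ #(Finset.Iio i) := Finset.card_le_card hsub
      _ = i := by simp

lemma exists_isVarSeries_of_varLE {k : ℕ} (Y : Conf q zm zp M) (τ : Equiv.Perm (Fin M))
    {w : Fin M → ℝ} (hw : Monotone (varKey ∘ w)) (hle : ∀ j, varLE (Y.1 (τ j)) (w j))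
    (heq : ∀ j : Fin M, (j : ℕ) < k → Y.1 (τ j) = w j) :
    ∃ v, IsVarSeries q zm zp Y v ∧ ∀ i : Fin M, (i : ℕ) < k → v i = w i := by
  let f : Fin M → ℝ ×ₗ ℝ := varKey ∘ Y.1 ∘ τ
  refine ⟨Y.1 ∘ ((Tuple.sort f).trans τ), isVarSeries_iff.2 ⟨⟨_, rfl⟩, Tuple.monotone_sort f⟩,
    fun i hi => varKey_injective ?_⟩
  exact sort_apply_eq_of_le hw (fun j => varKey_le_varKey_iff.2 (hle j))
    (fun j hj => congrArg varKey (heq j hj)) i hi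

end VariationalOrder

section LinkWeight

variable {q zm zp : ℝ} {M : ℕ} {X : Conf q zm zp (M + 1)} {y : Fin M → ℝ}

lemma qpochR_self (q : ℝ) (n : ℕ) : qpochR q q n = ∏ i : Fin n, (1 - q ^ ((i : ℕ) + 1)) := by
  simp only [qpochR, Finset.prod_range, pow_succ']

lemma qpochR_self_pos (hq0 : 0 < q) (hq1 : q < 1) (n : ℕ) : 0 < qpochR q q n := by
  rw [qpochR_self]
  exact Finset.prod_pos fun i _ => sub_pos.2 (pow_lt_one₀ hq0.le hq1 (Nat.succ_ne_zero _))

namespace Conf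

/-- The entry `qlink q zm zp M X Y` as a function of the unbundled tuple `Y.1`. -/
def linkWeight (X : Conf q zm zp (M + 1)) (y : Fin M → ℝ) : ℝ :=
  X.interlacing.indicator (fun y => (∏ i, |y i|) * qpochR q q M * vprod y / vprod X.1) y

lemma linkWeight_of_mem (hy : y ∈ X.interlacing) :
    X.linkWeight y = (∏ i, |y i|) * qpochR q q M * vprod y / vprod X.1 :=
  Set.indicator_of_mem hy _

lemma qlink_eq_linkWeight (Y : Conf q zm zp M) : qlink q zm zp M X Y = X.linkWeight Y.1 := by
  rw [qlink, linkWeight, Set.indicator_apply]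
  exact if_congr mem_interlacing.symm rfl rfl

lemma linkWeight_nonneg (hq0 : 0 < q) (hq1 : q < 1) (hzm : zm < 0) (hzp : 0 < zp)
    (y : Fin M → ℝ) : 0 ≤ X.linkWeight y := Set.indicator_nonneg (fun y hy => by
  have hqpoch := qpochR_self_pos hq0 hq1 M
  have hvprodX := vprod_pos X.2.1
  have hvprod := vprod_pos (strictMono_of_mem_interlacing hq0 hzm hzp hy)
  positivity) y

lemma linkWeight_eq_prod_indicator (y : Fin M → ℝ) :
    X.linkWeight y = (∏ i, (qInterval q zm zp (X.1 i.castSucc) (X.1 i.succ)).indicator abs (y i)) *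
      vprod y * (qpochR q q M / vprod X.1) := by
  by_cases hy : y ∈ X.interlacing
  · have hfactor (i : Fin M) := Set.indicator_of_mem (mem_interlacing.1 hy i) abs
    rw [linkWeight_of_mem hy, Finset.prod_congr rfl fun i _ => hfactor i]
    ring
  · obtain ⟨i, hi⟩ := not_forall.1 (mt mem_interlacing.2 hy)
    rw [linkWeight, Set.indicator_of_notMem hy,
      Finset.prod_eq_zero (Finset.mem_univ i) (Set.indicator_of_notMem hi _), zero_mul, zero_mul]

lemma hasSum_linkWeight (hq0 : 0 < q) (hq1 : q < 1) (hzm : zm < 0) (hzp : 0 < zp) :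
    HasSum X.linkWeight 1 := by
  let D : Matrix (Fin M) (Fin M) ℝ := Matrix.of fun i j =>
    X.1 i.succ ^ ((j : ℕ) + 1) - X.1 i.castSucc ^ ((j : ℕ) + 1)
  let W : Matrix (Fin M) (Fin M) ℝ := Matrix.of fun i j => (1 - q ^ ((j : ℕ) + 1))⁻¹ * D i j
  have hqpoch := (qpochR_self_pos hq0 hq1 M).ne'
  have hvprod := (vprod_pos X.2.1).ne'
  have htotal : W.det * (qpochR q q M / vprod X.1) = 1 := by
    rw [Matrix.det_mul_row, Finset.prod_inv_distrib, ← qpochR_self, ← vprod_eq_det_pow_sub_pow]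
    field_simp
  have hentry (i j : Fin M) : HasSum (fun t => (qInterval q zm zp (X.1 i.castSucc)
      (X.1 i.succ)).indicator abs t * t ^ (j : ℕ)) (W i j) := by
    simpa only [W, D, Matrix.of_apply, inv_mul_eq_div] using
      hasSum_indicator_qInterval_abs_mul_pow hq0 hq1 hzm hzp (X.2.2 _) (X.2.2 _)
        (X.castSucc_lt_succ i) j
  rw [funext linkWeight_eq_prod_indicator, ← htotal]
  exact (hasSum_prod_mul_vprod hentry).mul_right _

end Conf

end LinkWeight

section Estimates

open scoped Finset

variable {q zm zp a s t : ℝ}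

lemma abs_sub_eq_abs_mul_abs_div_sub_div (ha : a ≠ 0) (s t : ℝ) :
    |t - s| = |a| * |t / a - s / a| := by
  rw [← abs_mul, mul_sub, mul_div_cancel₀ _ ha, mul_div_cancel₀ _ ha]

lemma div_mem_Icc_of_abs_le (hq0 : 0 < q) (hq1 : q < 1) (hzm : zm < 0) (hzp : 0 < zp)
    (hs : s ∈ Lambda q zm zp) (ha : a ∈ Lambda q zm zp) (hle : |s| ≤ |a|) (hne : s ≠ a) :
    s / a ∈ Set.Icc (-1) q := by
  have ha0 : 0 < |a| := abs_pos.2 (ne_zero_of_mem_Lambda hq0 hzm hzp ha)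
  have habs : |s / a| ≤ 1 := by rwa [abs_div, div_le_one ha0]
  refine ⟨(abs_le.1 habs).1, ?_⟩
  refine (div_le_or_inv_le_div_of_mem_Lambda hq0 hq1 hzm hzp hs ha hne).resolve_right fun h => ?_
  exact ((one_lt_inv₀ hq0).2 hq1).not_ge (h.trans (abs_le.1 habs).2)

lemma abs_sub_le_mul_abs_sub_of_mem_Lambda (hq0 : 0 < q) (hq1 : q < 1) (hzm : zm < 0)
    (hzp : 0 < zp) (hs : s ∈ Lambda q zm zp) (ha : a ∈ Lambda q zm zp) (ht : t ∈ Lambda q zm zp)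
    (hle : |s| ≤ |a|) (hsa : s ≠ a) (hta : t ≠ a) :
    |t - s| ≤ (1 + q) / (1 - q) * |t - a| := by
  have ha0 := ne_zero_of_mem_Lambda hq0 hzm hzp ha
  obtain ⟨hs1, hsq⟩ := div_mem_Icc_of_abs_le hq0 hq1 hzm hzp hs ha hle hsa
  have hnormalized : |t / a - s / a| ≤ (1 + q) / (1 - q) * |t / a - 1| := by
    rw [div_mul_eq_mul_div, le_div_iff₀ (sub_pos.2 hq1)]
    rcases div_le_or_inv_le_div_of_mem_Lambda hq0 hq1 hzm hzp ht ha hta with h | h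
    · rw [abs_of_neg (by linarith : t / a - 1 < 0)]
      cases abs_cases (t / a - s / a) <;> nlinarith
    · have h1 : 1 ≤ q * (t / a) := by rwa [inv_le_iff_one_le_mul₀' hq0] at h
      rw [abs_of_pos (by nlinarith : 0 < t / a - 1)]
      cases abs_cases (t / a - s / a) <;> nlinarith
  rw [abs_sub_eq_abs_mul_abs_div_sub_div ha0, abs_sub_eq_abs_mul_abs_div_sub_div ha0 a,
    div_self ha0, mul_left_comm]
  exact mul_le_mul_of_nonneg_left hnormalized (abs_nonneg a)

lemma abs_sub_le_half_mul_abs_sub (hq0 : 0 < q) (hq1 : q < 1) (hzm : zm < 0) (hzp : 0 < zp)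
    (hs : s ∈ Lambda q zm zp) (ha : a ∈ Lambda q zm zp) (hsle : |s| ≤ |a|) (hsa : s ≠ a)
    (htle : |t| ≤ |a|) (hside : t < s ∧ t < a ∨ s < t ∧ a < t) :
    |t - s| ≤ (1 + q) / 2 * |t - a| := by
  have ha0 := ne_zero_of_mem_Lambda hq0 hzm hzp ha
  obtain ⟨-, hsq⟩ := div_mem_Icc_of_abs_le hq0 hq1 hzm hzp hs ha hsle hsa
  have ht1 : -1 ≤ t / a :=
    (abs_le.1 (by rwa [abs_div, div_le_one (abs_pos.2 ha0)] : |t / a| ≤ 1)).1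
  have hts : t / a < s / a := by
    rcases ha0.lt_or_gt with ha | ha
    · exact div_lt_div_of_neg_of_lt ha (by grind)
    · exact div_lt_div_of_pos_right (by grind) ha
  have hnormalized : |t / a - s / a| ≤ (1 + q) / 2 * |t / a - 1| := by
    rw [abs_of_neg (sub_neg.2 hts), abs_of_neg (by linarith : t / a - 1 < 0)]
    nlinarith
  rw [abs_sub_eq_abs_mul_abs_div_sub_div ha0, abs_sub_eq_abs_mul_abs_div_sub_div ha0 a,
    div_self ha0, mul_left_comm]
  exact mul_le_mul_of_nonneg_left hnormalized (abs_nonneg a)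

/-- A bound for the ratio in which `vprod y` changes when a coordinate `y s` is moved away from a
point `a` that dominates all but `k` of the `n` coordinates in absolute value: the distance from
`y s` to each of those `k` coordinates grows by at most `(1 + q) / (1 - q)`, and to each of the
others it shrinks at least by `(1 + q) / 2`. -/
def vprodRatioBound (q : ℝ) (n k : ℕ) : ℝ := ((1 + q) / (1 - q)) ^ k * ((1 + q) / 2) ^ (n - k)

lemma vprodRatioBound_nonneg (hq0 : 0 < q) (hq1 : q < 1) (n k : ℕ) : 0 ≤ vprodRatioBound q n k := by
  have := sub_pos.2 hq1
  unfold vprodRatioBound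
  positivity

lemma vprod_le_vprodRatioBound_mul_vprod_update (hq0 : 0 < q) (hq1 : q < 1) (hzm : zm < 0)
    (hzp : 0 < zp) {n : ℕ} {y : Fin n → ℝ} {S : Finset (Fin n)} {s : Fin n} (hs : s ∈ S)
    (hyΛ : ∀ l, y l ∈ Lambda q zm zp) (ha : a ∈ Lambda q zm zp) (hy : StrictMono y)
    (hya : StrictMono (Function.update y s a)) (hsle : |y s| ≤ |a|) (hsa : y s ≠ a)
    (hout : ∀ l ∉ S, |y l| ≤ |a|) :
    vprod y ≤ vprodRatioBound q n #S * vprod (Function.update y s a) := by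
  let β (l : Fin n) : ℝ := if l ∈ S then (1 + q) / (1 - q) else (1 + q) / 2
  have hside (l : Fin n) (hl : l ≠ s) : y l < y s ∧ y l < a ∨ y s < y l ∧ a < y l := by
    have hupdate : Function.update y s a l = y l := Function.update_of_ne hl a y
    have hself : Function.update y s a s = a := Function.update_self s a y
    rcases hl.lt_or_gt with hl | hl
    · exact Or.inl ⟨hy hl, by simpa only [hupdate, hself] using hya hl⟩
    · exact Or.inr ⟨hy hl, by simpa only [hupdate, hself] using hya hl⟩
  have hβ (l : Fin n) (hl : l ≠ s) : |y l - y s| ≤ β l * |y l - a| := by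
    by_cases hlS : l ∈ S
    · simp only [β, if_pos hlS]
      exact abs_sub_le_mul_abs_sub_of_mem_Lambda hq0 hq1 hzm hzp (hyΛ s) ha (hyΛ l) hsle hsa
        (by grind)
    · simp only [β, if_neg hlS]
      exact abs_sub_le_half_mul_abs_sub hq0 hq1 hzm hzp (hyΛ s) ha hsle hsa (hout l hlS)
        (hside l hl)
  have hC : 1 ≤ (1 + q) / (1 - q) := (one_le_div (sub_pos.2 hq1)).2 (by linarith)
  have hprod : ∏ l ∈ Finset.univ.erase s, β l ≤ vprodRatioBound q n #S := by
    calc ∏ l ∈ Finset.univ.erase s, β l ≤ β s * ∏ l ∈ Finset.univ.erase s, β l :=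
          le_mul_of_one_le_left (Finset.prod_nonneg fun l _ => by grind)
            (by simpa only [β, if_pos hs] using hC)
      _ = ∏ l, β l := Finset.mul_prod_erase _ _ (Finset.mem_univ s)
      _ = _ := by
        simp only [vprodRatioBound, β, Finset.prod_ite, Finset.prod_const]
        simp [← Finset.compl_filter, Finset.card_compl]
  exact (vprod_le_prod_mul_vprod_update hy hya hβ).trans
    (mul_le_mul_of_nonneg_right hprod (vprod_pos hya).le)

end Estimates

section TailBound

open scoped Finset

variable {q zm zp : ℝ} {M : ℕ} {X : Conf q zm zp (M + 1)}

namespace Conf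

lemma abs_dominant_pos (hq0 : 0 < q) (hzm : zm < 0) (hzp : 0 < zp) (i : Fin M) :
    0 < |X.dominant i| :=
  abs_pos.2 <| ne_zero_of_mem_Lambda hq0 hzm hzp <|
    mem_Lambda_of_mem_interlacing dominant_mem_interlacing i

lemma abs_le_abs_dominant {t : ℝ} {i : Fin M}
    (ht : t ∈ Set.Icc (X.1 i.castSucc) (X.1 i.succ)) : |t| ≤ |X.dominant i| :=
  (varLE_dominant ht).elim le_of_lt fun h => h.1.le

lemma linkWeight_le_of_ne_dominant (hq0 : 0 < q) (hq1 : q < 1) (hzm : zm < 0) (hzp : 0 < zp)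
    {S : Finset (Fin M)} (hS : ∀ s ∈ S, ∀ l ∉ S, |X.dominant l| ≤ |X.dominant s|) {s : Fin M}
    (hs : s ∈ S) {y : Fin M → ℝ} (hys : y s ≠ X.dominant s) :
    X.linkWeight y ≤ vprodRatioBound q M #S *
      ((qInterval q zm zp (X.1 s.castSucc) (X.1 s.succ)).indicator abs (y s) / |X.dominant s| *
        X.linkWeight (Function.update y s (X.dominant s))) := by
  have hK := vprodRatioBound_nonneg hq0 hq1 M #S
  by_cases hy : y ∈ X.interlacing
  swap
  · rw [linkWeight, Set.indicator_of_notMem hy]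
    exact mul_nonneg hK (mul_nonneg (div_nonneg (Set.indicator_nonneg (fun _ _ => abs_nonneg _) _)
      (abs_nonneg _)) (linkWeight_nonneg hq0 hq1 hzm hzp _))
  have hupdate : Function.update y s (X.dominant s) ∈ X.interlacing :=
    (Set.update_mem_pi_iff_of_mem hy).2 fun _ => mem_interlacing.1 dominant_mem_interlacing s
  have hle (l : Fin M) : |y l| ≤ |X.dominant l| :=
    abs_le_abs_dominant (qInterval_subset_Icc (mem_interlacing.1 hy l))
  have hvprod := vprod_le_vprodRatioBound_mul_vprod_update hq0 hq1 hzm hzp hs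
    (mem_Lambda_of_mem_interlacing hy)
    (mem_Lambda_of_mem_interlacing dominant_mem_interlacing s)
    (strictMono_of_mem_interlacing hq0 hzm hzp hy)
    (strictMono_of_mem_interlacing hq0 hzm hzp hupdate) (hle s) hys
    fun l hl => (hle l).trans (hS s hs l hl)
  have hprod : ∏ i, |Function.update y s (X.dominant s) i| =
      |X.dominant s| * ∏ i ∈ Finset.univ.erase s, |y i| := by
    rw [← Finset.mul_prod_erase _ _ (Finset.mem_univ s), Function.update_self]
    exact congrArg _ (Finset.prod_congr rfl fun i hi => by
      rw [Function.update_of_ne (Finset.ne_of_mem_erase hi)])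
  have hdom := abs_dominant_pos (X := X) hq0 hzm hzp s
  have hqpoch := qpochR_self_pos hq0 hq1 M
  have hvprodX := vprod_pos X.2.1
  rw [linkWeight_of_mem hy, linkWeight_of_mem hupdate, hprod,
    Set.indicator_of_mem (mem_interlacing.1 hy s), ← Finset.mul_prod_erase _ _ (Finset.mem_univ s)]
  calc |y s| * (∏ i ∈ Finset.univ.erase s, |y i|) * qpochR q q M * vprod y / vprod X.1
      ≤ |y s| * (∏ i ∈ Finset.univ.erase s, |y i|) * qpochR q q M *
          (vprodRatioBound q M #S * vprod (Function.update y s (X.dominant s))) /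
            vprod X.1 := by gcongr
    _ = _ := by field_simp

lemma hasSum_indicator_qInterval_abs_div_abs_dominant (hq0 : 0 < q) (hq1 : q < 1) (hzm : zm < 0)
    (hzp : 0 < zp) (i : Fin M) :
    HasSum (fun t => (qInterval q zm zp (X.1 i.castSucc) (X.1 i.succ)).indicator abs t /
      |X.dominant i|) ((X.1 i.succ - X.1 i.castSucc) / (1 - q) / |X.dominant i|) := by
  simpa using (hasSum_indicator_qInterval_abs_mul_pow hq0 hq1 hzm hzp (X.2.2 _) (X.2.2 _)
    (X.castSucc_lt_succ i) 0).div_const |X.dominant i|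

lemma sub_div_div_abs_dominant_le (hq0 : 0 < q) (hq1 : q < 1) (hzm : zm < 0)
    (hzp : 0 < zp) (i : Fin M) :
    (X.1 i.succ - X.1 i.castSucc) / (1 - q) / |X.dominant i| ≤ 2 / (1 - q) := by
  have hlt := X.castSucc_lt_succ i
  have hleft := abs_le.1 (X.abs_le_abs_dominant (Set.left_mem_Icc.2 hlt.le))
  have hright := abs_le.1 (X.abs_le_abs_dominant (Set.right_mem_Icc.2 hlt.le))
  rw [div_right_comm]
  exact div_le_div_of_nonneg_right ((div_le_iff₀ (abs_dominant_pos hq0 hzm hzp i)).2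
    (by linarith)) (sub_pos.2 hq1).le

lemma tsum_indicator_ne_dominant_linkWeight_le (hq0 : 0 < q) (hq1 : q < 1) (hzm : zm < 0)
    (hzp : 0 < zp) {S : Finset (Fin M)}
    (hS : ∀ s ∈ S, ∀ l ∉ S, |X.dominant l| ≤ |X.dominant s|) {s : Fin M} (hs : s ∈ S) :
    ∑' y, {y | y s ≠ X.dominant s}.indicator X.linkWeight y ≤
      vprodRatioBound q M #S * (2 / (1 - q)) := by
  have hK := vprodRatioBound_nonneg hq0 hq1 M #S
  have hnonneg := X.linkWeight_nonneg hq0 hq1 hzm hzp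
  have hratio (t : ℝ) : 0 ≤ (qInterval q zm zp (X.1 s.castSucc) (X.1 s.succ)).indicator abs t /
      |X.dominant s| :=
    div_nonneg (Set.indicator_nonneg (fun _ _ => abs_nonneg _) _) (abs_nonneg _)
  have htotal := X.hasSum_linkWeight hq0 hq1 hzm hzp
  obtain ⟨hsummable, hle⟩ := tsum_mul_update_le (β := fun _ : Fin M => ℝ) hratio hnonneg
    (hasSum_indicator_qInterval_abs_div_abs_dominant hq0 hq1 hzm hzp s) htotal (X.dominant s)
  have hpointwise (y : Fin M → ℝ) : {y | y s ≠ X.dominant s}.indicator X.linkWeight y ≤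
      vprodRatioBound q M #S *
        ((qInterval q zm zp (X.1 s.castSucc) (X.1 s.succ)).indicator abs (y s) / |X.dominant s| *
          X.linkWeight (Function.update y s (X.dominant s))) :=
    Set.indicator_le' (fun _ hy => linkWeight_le_of_ne_dominant hq0 hq1 hzm hzp hS hs hy)
      (fun _ _ => mul_nonneg hK (mul_nonneg (hratio _) (hnonneg _))) y
  calc ∑' y, {y | y s ≠ X.dominant s}.indicator X.linkWeight y
      ≤ ∑' y, vprodRatioBound q M #S *
          ((qInterval q zm zp (X.1 s.castSucc) (X.1 s.succ)).indicator abs (y s) / |X.dominant s| *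
            X.linkWeight (Function.update y s (X.dominant s))) :=
        Summable.tsum_le_tsum hpointwise (htotal.summable.indicator _) (hsummable.mul_left _)
    _ ≤ vprodRatioBound q M #S * (2 / (1 - q)) := by
        rw [tsum_mul_left]
        refine mul_le_mul_of_nonneg_left (hle.trans ?_) hK
        rw [mul_one]
        exact sub_div_div_abs_dominant_le hq0 hq1 hzm hzp s

lemma one_sub_card_mul_le_tsum_linkWeight (hq0 : 0 < q) (hq1 : q < 1) (hzm : zm < 0)
    (hzp : 0 < zp) {S : Finset (Fin M)}
    (hS : ∀ s ∈ S, ∀ l ∉ S, |X.dominant l| ≤ |X.dominant s|) {G : Set (Fin M → ℝ)}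
    (hG : ∀ y ∈ X.interlacing, (∀ s ∈ S, y s = X.dominant s) → y ∈ G) :
    1 - #S * (vprodRatioBound q M #S * (2 / (1 - q))) ≤
      ∑' y : G, X.linkWeight y := by
  have hcover := le_tsum_subtype_add_sum_tsum_indicator (X.linkWeight_nonneg hq0 hq1 hzm hzp)
    (X.hasSum_linkWeight hq0 hq1 hzm hzp) G S (fun s => {y | y s ≠ X.dominant s})
    fun y hy hyG => by
      have hmem : y ∈ X.interlacing := Set.mem_of_indicator_ne_zero hy
      simpa using mt (hG y hmem) hyG
  have htail := Finset.sum_le_card_nsmul S _ _ fun s hs =>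
    tsum_indicator_ne_dominant_linkWeight_le hq0 hq1 hzm hzp hS hs
  rw [nsmul_eq_mul] at htail
  linarith

lemma exists_isVarSeries_of_eq_dominant {k : ℕ} {v : Fin (M + 1) → ℝ} (hv : IsVarSeries q zm zp X v)
    {τ : Equiv.Perm (Fin M)} (hτ : ∀ j, X.dominant (τ j) = v j.castSucc) {Y : Conf q zm zp M}
    (hY : Y.1 ∈ X.interlacing) (heq : ∀ j : Fin M, (j : ℕ) < k → Y.1 (τ j) = X.dominant (τ j)) :
    ∃ vY, IsVarSeries q zm zp Y vY ∧ ∀ i : Fin M, (i : ℕ) < k → vY i = v i.castSucc :=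
  exists_isVarSeries_of_varLE Y τ ((isVarSeries_iff.1 hv).2.comp Fin.strictMono_castSucc.monotone)
    (fun j => hτ j ▸ varLE_dominant (qInterval_subset_Icc (mem_interlacing.1 hY _)))
    fun j hj => (heq j hj).trans (hτ j)

lemma one_sub_mul_le_tsum_qlink (hq0 : 0 < q) (hq1 : q < 1) (hzm : zm < 0) (hzp : 0 < zp)
    {k : ℕ} (hk : k ≤ M) {v : Fin (M + 1) → ℝ} (hv : IsVarSeries q zm zp X v) :
    1 - k * (vprodRatioBound q M k * (2 / (1 - q))) ≤
      ∑' Y : {Y : Conf q zm zp M // ∃ vY, IsVarSeries q zm zp Y vY ∧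
        ∀ i : Fin M, (i : ℕ) < k → vY i = v i.castSucc}, qlink q zm zp M X Y.1 := by
  obtain ⟨τ, hτ⟩ := hv.exists_perm_dominant hq0 hzm hzp
  let S : Finset (Fin M) := ({j | (j : ℕ) < k} : Finset (Fin M)).map τ.toEmbedding
  have hmemS (j : Fin M) : τ j ∈ S ↔ (j : ℕ) < k := by simp [S]
  have hcard : S.card = k := by simp [S, Fin.card_filter_val_lt, hk]
  have hS : ∀ s ∈ S, ∀ l ∉ S, |X.dominant l| ≤ |X.dominant s| := by
    refine τ.surjective.forall.2 fun i hi => τ.surjective.forall.2 fun j hj => ?_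
    rw [hmemS] at hi hj
    have hij : i.castSucc < j.castSucc := Fin.lt_def.2 (by grind)
    rw [hτ, hτ]
    exact (hv.2 _ _ hij).elim le_of_lt fun h => h.1.le
  let P : Type := {Y : Conf q zm zp M // ∃ vY, IsVarSeries q zm zp Y vY ∧
    ∀ i : Fin M, (i : ℕ) < k → vY i = v i.castSucc}
  have hinj : Function.Injective fun Y : P => Y.1.1 :=
    Subtype.val_injective.comp Subtype.val_injective
  have hG : ∀ y ∈ X.interlacing, (∀ s ∈ S, y s = X.dominant s) →
      y ∈ Set.range fun Y : P => Y.1.1 := fun y hy hyS =>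
    ⟨⟨⟨y, strictMono_of_mem_interlacing hq0 hzm hzp hy, mem_Lambda_of_mem_interlacing hy⟩,
      exists_isVarSeries_of_eq_dominant hv hτ hy fun j hj => hyS _ ((hmemS j).2 hj)⟩, rfl⟩
  have hbound := one_sub_card_mul_le_tsum_linkWeight hq0 hq1 hzm hzp hS hG
  rw [hcard, tsum_range _ hinj] at hbound
  simpa only [qlink_eq_linkWeight] using hbound

end Conf

end TailBound

lemma exists_pos_mul_pow_le_exp_neg_mul_div {r : ℝ} (hr0 : 0 < r) (hr1 : r < 1) (B : ℝ) :
    ∃ c : ℝ, 0 < c ∧ ∀ n : ℕ, B * r ^ n ≤ Real.exp (-c * n) / c := by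
  have hlog : 0 < -Real.log r := neg_pos.2 (Real.log_neg hr0 hr1)
  have hB : 0 < |B| + 1 := by positivity
  let c := min (-Real.log r) (|B| + 1)⁻¹
  have hc : 0 < c := lt_min hlog (inv_pos.2 hB)
  refine ⟨c, hc, fun n => ?_⟩
  have hBc : B ≤ c⁻¹ := calc
    B ≤ |B| + 1 := (le_abs_self B).trans (le_add_of_nonneg_right zero_le_one)
    _ ≤ c⁻¹ := (le_inv_comm₀ hB hc).2 (min_le_right _ _)
  have hpow : r ^ n ≤ Real.exp (-c * n) := by
    rw [← Real.rpow_natCast, Real.rpow_def_of_pos hr0, Real.exp_le_exp]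
    exact mul_le_mul_of_nonneg_right (le_neg_of_le_neg (min_le_left _ _)) n.cast_nonneg
  calc B * r ^ n ≤ c⁻¹ * Real.exp (-c * n) := by gcongr
    _ = Real.exp (-c * n) / c := by rw [mul_comm, div_eq_mul_inv]

theorem first_terms_frozen_general {q : ℝ} (hq0 : 0 < q) (hq1 : q < 1) (k : ℕ) :
    ∃ c : ℝ, 0 < c ∧ ∀ zm zp : ℝ, zm < 0 → 0 < zp →
      ∀ M : ℕ, k ≤ M → ∀ X : Conf q zm zp (M + 1), ∀ vX : Fin (M + 1) → ℝ,
        IsVarSeries q zm zp X vX →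
        1 - Real.exp (-c * (M + 1)) / c ≤
          ∑' Y : {Y : Conf q zm zp M // ∃ vY : Fin M → ℝ,
              IsVarSeries q zm zp Y vY ∧
              ∀ i : Fin M, (i : ℕ) < k → vY i = vX i.castSucc},
            qlink q zm zp M X Y.1 := by
  have hr0 : 0 < (1 + q) / 2 := by positivity
  obtain ⟨c, hc, hexp⟩ := exists_pos_mul_pow_le_exp_neg_mul_div hr0 (by linarith)
    (k * (((1 + q) / (1 - q)) ^ k * (2 / (1 - q))) / ((1 + q) / 2) ^ (k + 1))
  refine ⟨c, hc, fun zm zp hzm hzp M hk X vX hv => ?_⟩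
  refine le_trans (sub_le_sub_left ?_ 1) (Conf.one_sub_mul_le_tsum_qlink hq0 hq1 hzm hzp hk hv)
  calc k * (vprodRatioBound q M k * (2 / (1 - q)))
      = k * (((1 + q) / (1 - q)) ^ k * (2 / (1 - q))) / ((1 + q) / 2) ^ (k + 1) *
          ((1 + q) / 2) ^ (M + 1) := by
        rw [vprodRatioBound, div_mul_eq_mul_div, eq_div_iff (pow_pos hr0 _).ne',
          show M + 1 = M - k + (k + 1) by lia, pow_add _ (M - k)]
        ring
    _ ≤ Real.exp (-c * (M + 1)) / c := by simpa using hexp (M + 1)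

/-- Lemma 3.10: for fixed k there is c > 0 (depending only on q, ζ₋, ζ₊, k) such that
for every N = M+1 > k and X ∈ 𝔾_N, the Λ^N_{N−1}(X,·)-probability that the first k terms
of the variational series of Y coincide with those of X is at least 1 − e^{−cN}/c. -/
theorem first_terms_frozen (q zm zp : ℝ) (hq0 : 0 < q) (hq1 : q < 1) (hzm : zm < 0)
    (hzp : 0 < zp) (k : ℕ) (hk : 1 ≤ k) :
    ∃ c : ℝ, 0 < c ∧
      ∀ M : ℕ, k ≤ M → ∀ X : Conf q zm zp (M+1), ∀ vX : Fin (M+1) → ℝ,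
        IsVarSeries q zm zp X vX →
        1 - Real.exp (-c * (M+1)) / c ≤
          ∑' Y : {Y : Conf q zm zp M // ∃ vY : Fin M → ℝ,
              IsVarSeries q zm zp Y vY ∧
              ∀ i : Fin M, (i : ℕ) < k → vY i = vX i.castSucc},
            qlink q zm zp M X Y.1 := by
  obtain ⟨c, hc, hbound⟩ := first_terms_frozen_general hq0 hq1 k
  exact ⟨c, hc, hbound zm zp hzm hzp⟩

end
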